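/- Let S : ℝ² → ℝ be smooth, let μ > 0, δ₂ > 0, and let K ⊆ ℝ² be a convex set such that for all (x,y) ∈ K: |DS(x,y)| ≥ μ, and |∂_y^β DS(x,y)| ≤ μ δ₂^{−β} for β = 1, 2, where DS := ∂_x∂_y(∂_x−∂_y)S. For τ ∈ ℝ set S_τ(x,y) := S(x,y) − S(x−τ, y+τ). Then for every τ ∈ ℝ and every (x,y) such that both (x,y) ∈ K and (x−τ, y+τ) ∈ K, one has: |∂_x∂_y S_τ(x,y)| ≥ μ|τ|, |∂_x∂_y² S_τ(x,y)| ≤ μ δ₂^{−1} |τ|, and |∂_x∂_y³ S_τ(x,y)| ≤ μ δ₂^{−2} |τ|. -/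

import Mathlib

open MeasureTheory

noncomputable section

/-- Partial derivative in the first variable. -/
def pdx (f : ℝ × ℝ → ℝ) : ℝ × ℝ → ℝ := fun p => deriv (fun t => f (t, p.2)) p.1

/-- Partial derivative in the second variable. -/
def pdy (f : ℝ × ℝ → ℝ) : ℝ × ℝ → ℝ := fun p => deriv (fun t => f (p.1, t)) p.2

/-- The differential operator `DS = ∂ₓ∂_y(∂ₓ − ∂_y)S = S_xxy − S_xyy`. -/
def DOp (S : ℝ × ℝ → ℝ) : ℝ × ℝ → ℝ := pdx (pdy (fun p => pdx S p - pdy S p))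

/-- The difference phase `S_τ(x,y) = S(x,y) − S(x−τ, y+τ)`. -/
def Sdiff (S : ℝ × ℝ → ℝ) (τ : ℝ) : ℝ × ℝ → ℝ := fun p => S p - S (p.1 - τ, p.2 + τ)

abbrev Smooth2 (f : ℝ × ℝ → ℝ) : Prop := ContDiff ℝ (⊤ : ℕ∞) f

lemma sm_diff {f : ℝ × ℝ → ℝ} (hf : Smooth2 f) : Differentiable ℝ f :=
  ContDiff.differentiable hf (by simp)

lemma pdx_eq {f : ℝ × ℝ → ℝ} (hf : Smooth2 f) : pdx f = fun p => fderiv ℝ f p (1, 0) := by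
  funext p
  have h := ((sm_diff hf) (p.1, p.2)).hasFDerivAt.comp_hasDerivAt p.1
    ((hasDerivAt_id p.1).prodMk (hasDerivAt_const p.1 p.2))
  exact h.deriv

lemma pdy_eq {f : ℝ × ℝ → ℝ} (hf : Smooth2 f) : pdy f = fun p => fderiv ℝ f p (0, 1) := by
  funext p
  have h := ((sm_diff hf) (p.1, p.2)).hasFDerivAt.comp_hasDerivAt p.2
    ((hasDerivAt_const p.2 p.1).prodMk (hasDerivAt_id p.2))
  exact h.deriv

lemma sm_fderiv {f : ℝ × ℝ → ℝ} (hf : Smooth2 f) :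
    ContDiff ℝ (⊤ : ℕ∞) (fderiv ℝ f) :=
  ContDiff.fderiv_right hf (by simp)

lemma sm_pdx {f : ℝ × ℝ → ℝ} (hf : Smooth2 f) : Smooth2 (pdx f) := by
  rw [pdx_eq hf]
  exact (sm_fderiv hf).clm_apply contDiff_const

lemma sm_pdy {f : ℝ × ℝ → ℝ} (hf : Smooth2 f) : Smooth2 (pdy f) := by
  rw [pdy_eq hf]
  exact (sm_fderiv hf).clm_apply contDiff_const

lemma pd_comm {f : ℝ × ℝ → ℝ} (hf : Smooth2 f) : pdx (pdy f) = pdy (pdx f) := by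
  rw [pdx_eq (sm_pdy hf), pdy_eq (sm_pdx hf), pdx_eq hf, pdy_eq hf]
  funext p
  have hd : DifferentiableAt ℝ (fderiv ℝ f) p :=
    ((sm_fderiv hf).differentiable (by simp)) p
  have hs : IsSymmSndFDerivAt ℝ f p :=
    (ContDiff.contDiffAt hf).isSymmSndFDerivAt (by
      simp only [minSmoothness_of_isRCLikeNormedField]
      exact WithTop.coe_le_coe.2 (le_top : (2 : ℕ∞) ≤ ⊤))
  rw [fderiv_clm_apply hd (by fun_prop), fderiv_clm_apply hd (by fun_prop)]
  simpa using hs.eq (1, 0) (0, 1)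

lemma pdx_sub {f g : ℝ × ℝ → ℝ} (hf : Smooth2 f) (hg : Smooth2 g) :
    pdx (fun p => f p - g p) = fun p => pdx f p - pdx g p := by
  rw [pdx_eq (ContDiff.sub hf hg), pdx_eq hf, pdx_eq hg]
  funext p
  rw [fderiv_fun_sub (sm_diff hf p) (sm_diff hg p)]
  rfl

lemma pdy_sub {f g : ℝ × ℝ → ℝ} (hf : Smooth2 f) (hg : Smooth2 g) :
    pdy (fun p => f p - g p) = fun p => pdy f p - pdy g p := by
  rw [pdy_eq (ContDiff.sub hf hg), pdy_eq hf, pdy_eq hg]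
  funext p
  rw [fderiv_fun_sub (sm_diff hf p) (sm_diff hg p)]
  rfl

lemma sm_shift {f : ℝ × ℝ → ℝ} (hf : Smooth2 f) (τ : ℝ) :
    Smooth2 (fun p => f (p.1 - τ, p.2 + τ)) := by
  unfold Smooth2 at *
  fun_prop

lemma pdx_Sdiff {f : ℝ × ℝ → ℝ} (hf : Smooth2 f) (τ : ℝ) :
    pdx (Sdiff f τ) = Sdiff (pdx f) τ := by
  unfold Sdiff
  rw [pdx_sub hf (sm_shift hf τ)]
  funext p
  congr 1
  exact deriv_comp_sub_const (f := fun t => f (t, p.2 + τ)) (a := τ) (x := p.1)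

lemma pdy_Sdiff {f : ℝ × ℝ → ℝ} (hf : Smooth2 f) (τ : ℝ) :
    pdy (Sdiff f τ) = Sdiff (pdy f) τ := by
  unfold Sdiff
  rw [pdy_sub hf (sm_shift hf τ)]
  funext p
  congr 1
  exact deriv_comp_add_const (f := fun t => f (p.1 - τ, t)) (a := τ) (x := p.2)

lemma mvt_Sdiff {G : ℝ × ℝ → ℝ} (hG : Smooth2 G) {K : Set (ℝ × ℝ)} (hK : Convex ℝ K)
    {τ x y : ℝ} (hxy : (x, y) ∈ K) (hxy' : (x - τ, y + τ) ∈ K) :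
    ∃ p ∈ K, Sdiff G τ (x, y) = (pdx G p - pdy G p) * τ := by
  have hd : ∀ t : ℝ, HasDerivAt (fun t : ℝ => G (x - t * τ, y + t * τ))
      (-((pdx G (x - t * τ, y + t * τ) - pdy G (x - t * τ, y + t * τ)) * τ)) t := by
    intro t
    have h := ((sm_diff hG) (x - t * τ, y + t * τ)).hasFDerivAt.comp_hasDerivAt t
      ((((hasDerivAt_id t).mul_const τ).const_sub x).prodMk
        (((hasDerivAt_id t).mul_const τ).const_add y))
    refine HasDerivAt.congr_deriv (f := fun t : ℝ => G (x - t * τ, y + t * τ)) h ?_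
    rw [pdx_eq hG, pdy_eq hG]
    have : ((-(1 * τ), 1 * τ) : ℝ × ℝ) = (-τ) • ((1, 0) : ℝ × ℝ) + τ • ((0, 1) : ℝ × ℝ) := by
      ext <;> simp
    rw [this, map_add, map_smul, map_smul]
    simp only [smul_eq_mul]
    ring
  obtain ⟨c, hc, hce⟩ := exists_hasDerivAt_eq_slope _ _ (zero_lt_one (α := ℝ))
    (fun t _ => (hd t).continuousAt.continuousWithinAt) (fun t _ => hd t)
  refine ⟨(x - c * τ, y + c * τ), ?_, ?_⟩
  · have := hK hxy hxy' (a := 1 - c) (b := c) (by linarith [hc.2]) hc.1.le (by ring)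
    convert this using 1
    ext <;> simp <;> ring
  · simp only [Sdiff]
    simp at hce
    linarith

lemma DOp_eq {S : ℝ × ℝ → ℝ} (hS : Smooth2 S) :
    DOp S = fun p => pdx (pdx (pdy S)) p - pdy (pdx (pdy S)) p := by
  unfold DOp
  rw [pdy_sub (sm_pdx hS) (sm_pdy hS), pdx_sub (sm_pdy (sm_pdx hS)) (sm_pdy (sm_pdy hS)),
    ← pd_comm hS, pd_comm (sm_pdy hS)]

lemma pdy_step {G : ℝ × ℝ → ℝ} (hG : Smooth2 G) :
    pdy (fun p => pdx G p - pdy G p) = fun p => pdx (pdy G) p - pdy (pdy G) p := by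
  rw [pdy_sub (sm_pdx hG) (sm_pdy hG), pd_comm hG]

/-- Bounds for the mixed partials of `S_τ` on a convex set. -/
theorem Sdiff_mixed_partial_bounds
    (S : ℝ × ℝ → ℝ) (hS : ContDiff ℝ (⊤ : ℕ∞) S)
    (μ δ₂ : ℝ) (hμ : 0 < μ) (hδ₂ : 0 < δ₂)
    (K : Set (ℝ × ℝ)) (hK : Convex ℝ K)
    (h1 : ∀ p ∈ K, μ ≤ |DOp S p|)
    (h2 : ∀ p ∈ K, |pdy (DOp S) p| ≤ μ * δ₂⁻¹)
    (h3 : ∀ p ∈ K, |pdy (pdy (DOp S)) p| ≤ μ * δ₂⁻¹ ^ 2)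
    (τ x y : ℝ) (hxy : (x, y) ∈ K) (hxy' : (x - τ, y + τ) ∈ K) :
    μ * |τ| ≤ |pdx (pdy (Sdiff S τ)) (x, y)| ∧
    |pdx (pdy (pdy (Sdiff S τ))) (x, y)| ≤ μ * δ₂⁻¹ * |τ| ∧
    |pdx (pdy (pdy (pdy (Sdiff S τ)))) (x, y)| ≤ μ * δ₂⁻¹ ^ 2 * |τ| := by
  have s1 := sm_pdy hS
  have s2 := sm_pdy s1
  have s3 := sm_pdy s2
  have e1 := DOp_eq hS
  have e2 : pdy (DOp S) = fun p => pdx (pdx (pdy (pdy S))) p - pdy (pdx (pdy (pdy S))) p := by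
    rw [e1, pdy_step (sm_pdx s1), ← pd_comm s1]
  have e3 : pdy (pdy (DOp S)) =
      fun p => pdx (pdx (pdy (pdy (pdy S)))) p - pdy (pdx (pdy (pdy (pdy S)))) p := by
    rw [e2, pdy_step (sm_pdx s2), ← pd_comm s2]
  rw [pdy_Sdiff hS, pdy_Sdiff s1, pdy_Sdiff s2, pdx_Sdiff s1, pdx_Sdiff s2, pdx_Sdiff s3]
  refine ⟨?_, ?_, ?_⟩
  · obtain ⟨p, hp, he⟩ := mvt_Sdiff (sm_pdx s1) hK hxy hxy'
    have h := h1 p hp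
    rw [e1] at h
    rw [he, abs_mul]
    exact mul_le_mul_of_nonneg_right h (abs_nonneg _)
  · obtain ⟨p, hp, he⟩ := mvt_Sdiff (sm_pdx s2) hK hxy hxy'
    have h := h2 p hp
    rw [e2] at h
    rw [he, abs_mul]
    exact mul_le_mul_of_nonneg_right h (abs_nonneg _)
  · obtain ⟨p, hp, he⟩ := mvt_Sdiff (sm_pdx s3) hK hxy hxy'
    have h := h3 p hp
    rw [e3] at h
    rw [he, abs_mul]
    exact mul_le_mul_of_nonneg_right h (abs_nonneg _)
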